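/- There exists a numerical constant ℓ₀ > 0 (independent of n and T) such that for all n ≥ 10 and T ≥ 2, the function f̄(x,z;ȳ) = -Ψ(1)Φ(x₁) + Σ_{i=2}^{T}[Ψ(-z_i)Φ(-x_i) - Ψ(z_i)Φ(x_i)] + Σ_{i=1}^{T-1} h(x_i, z_{i+1}; ȳ^{(i)}) + Σ_{i=1}^{T-1}[c₁·x_i² + c₂·z_{i+1}²], defined on ℝ^T × ℝ^{T-1} × ℝ^{n(T-1)}, is ℓ₀-smooth: its gradient is ℓ₀-Lipschitz with respect to the Euclidean norm. -/

import Mathlib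

open Matrix

/-- `Ψ(x) = 0` for `x ≤ 1/2`, `exp(1 - 1/(2x-1)²)` for `x > 1/2`. -/
noncomputable def Psi (x : ℝ) : ℝ :=
  if x ≤ 1 / 2 then 0 else Real.exp (1 - 1 / (2 * x - 1) ^ 2)

/-- `Φ(x) = √e · ∫_{-∞}^x e^{-t²/2} dt`. -/
noncomputable def Phi (x : ℝ) : ℝ :=
  Real.sqrt (Real.exp 1) * ∫ t in Set.Iic x, Real.exp (-t ^ 2 / 2)

/-- The `n × n` tridiagonal matrix with `A 1 1 = A n n = 1`, diagonal `2` otherwise,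
off-diagonal entries `-1`, and all other entries `0` (0-indexed in Lean). -/
noncomputable def triA (n : ℕ) : Matrix (Fin n) (Fin n) ℝ :=
  Matrix.of fun i j =>
    if i = j then (if (i : ℕ) = 0 ∨ (i : ℕ) = n - 1 then 1 else 2)
    else if (i : ℕ) + 1 = (j : ℕ) ∨ (j : ℕ) + 1 = (i : ℕ) then -1 else 0

/-- `B = (α I + A)⁻¹`. -/
noncomputable def Bmat (n : ℕ) (α : ℝ) : Matrix (Fin n) (Fin n) ℝ :=
  (α • (1 : Matrix (Fin n) (Fin n) ℝ) + triA n)⁻¹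

/-- `h(x, z; y) = -(1/2)·Σ_{i=1}^{n-1} (yᵢ - yᵢ₊₁)² - (1/(2n²))·‖y‖₂²
    + √(C/n)·(x y₁ - (1/2) z yₙ)`. -/
noncomputable def hfun (n : ℕ) (hn : 0 < n) (C x z : ℝ) (y : Fin n → ℝ) : ℝ :=
  -(1 / 2) * (∑ i : Fin n, if h : (i : ℕ) + 1 < n then (y i - y ⟨(i : ℕ) + 1, h⟩) ^ 2 else 0)
    - (1 / (2 * (n : ℝ) ^ 2)) * ∑ i : Fin n, (y i) ^ 2
    + Real.sqrt (C / n) * (x * y ⟨0, hn⟩ - (1 / 2) * z * y ⟨n - 1, by omega⟩)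

/-- The unscaled deterministic hard instance `f̄^{nc-sc}` on the Euclidean space
`ℝ^T × ℝ^{T-1} × ℝ^{n(T-1)}` (so that gradients and norms are Euclidean over all
variables). `Sum.inl j` is `x_{j+1}`, `Sum.inr (Sum.inl j)` is `z_{j+2}`, and
`Sum.inr (Sum.inr (j, k))` is coordinate `k+1` of `ȳ^{(j+1)}`. -/
noncomputable def fbarE (n T : ℕ) (hn : 0 < n) (hT : 2 ≤ T) (C c1 c2 : ℝ)
    (w : EuclideanSpace ℝ (Fin T ⊕ (Fin (T - 1) ⊕ Fin (T - 1) × Fin n))) : ℝ :=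
  -Psi 1 * Phi (w (Sum.inl ⟨0, by omega⟩))
    + ∑ j : Fin (T - 1),
        (Psi (-w (Sum.inr (Sum.inl j)))
            * Phi (-w (Sum.inl ⟨(j : ℕ) + 1, by have := j.isLt; omega⟩))
          - Psi (w (Sum.inr (Sum.inl j)))
            * Phi (w (Sum.inl ⟨(j : ℕ) + 1, by have := j.isLt; omega⟩)))
    + ∑ j : Fin (T - 1),
        hfun n hn C (w (Sum.inl ⟨(j : ℕ), by have := j.isLt; omega⟩))
          (w (Sum.inr (Sum.inl j))) (fun k => w (Sum.inr (Sum.inr (j, k))))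
    + ∑ j : Fin (T - 1),
        (c1 * (w (Sum.inl ⟨(j : ℕ), by have := j.isLt; omega⟩)) ^ 2
          + c2 * (w (Sum.inr (Sum.inl j))) ^ 2)

/-!
Smoothness of `f` can be measured against a quadratic form `q` instead of a multiple of `‖·‖²`, by
asking that `(Df(u) d - Df(v) d)² ≤ q(u - v) q(d)`. By Cauchy–Schwarz this is additive in the pair
`(f, q)`. Every summand of `f̄` is smooth with respect to a multiple of the sum of squares of the
few coordinates it involves, and a coordinate occurs in a bounded number of summands, so the forms
add up to a multiple of `‖·‖²` that does not grow with `T`.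

The multiple is controlled by bounds on `Ψ`, `Φ` and their first two derivatives, and by `C / n`,
`c₁`, `c₂`. For the latter, the first column of `B` solves a linear recurrence along a path: its
entries increase from `Bₙ₁` to `B₁₁`, and by a factor of at most `exp (α n²) = e` since `α = 1/n²`.
This gives `1/3 ≤ a₂ ≤ a₁ ≤ 3 a₂`.
-/

open scoped NNReal

/-! ### Smoothness relative to a quadratic form -/

section SmoothWrt

variable {E : Type*} [NormedAddCommGroup E] [NormedSpace ℝ E] {f g q r : E → ℝ}

/-- `f` is smooth with respect to the (quadratic) form `q`: the variation of its derivative is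
dominated by `q`. For a twice differentiable `f` this reads `-q ≤ D²f ≤ q`, but no second derivative
is asked for. Keeping `q` instead of a single Lipschitz constant allows sums of functions of few
variables to be estimated without losing a factor equal to the number of summands. -/
structure SmoothWrt (f q : E → ℝ) : Prop where
  nonneg : ∀ d, 0 ≤ q d
  differentiable : Differentiable ℝ f
  sq_fderiv_sub_le : ∀ u v d, (fderiv ℝ f u d - fderiv ℝ f v d) ^ 2 ≤ q (u - v) * q d

namespace SmoothWrt

lemma of_hasFDerivAt {f' : E → E →L[ℝ] ℝ} (hq : ∀ d, 0 ≤ q d) (hf : ∀ u, HasFDerivAt f (f' u) u)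
    (h : ∀ u v d, (f' u d - f' v d) ^ 2 ≤ q (u - v) * q d) : SmoothWrt f q where
  nonneg := hq
  differentiable u := (hf u).differentiableAt
  sq_fderiv_sub_le u v d := by simpa only [(hf _).fderiv] using h u v d

lemma mono (hf : SmoothWrt f q) (hqr : ∀ d, q d ≤ r d) : SmoothWrt f r where
  nonneg d := (hf.nonneg d).trans (hqr d)
  differentiable := hf.differentiable
  sq_fderiv_sub_le u v d := (hf.sq_fderiv_sub_le u v d).trans <|
    mul_le_mul (hqr _) (hqr _) (hf.nonneg _) ((hf.nonneg _).trans (hqr _))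

lemma const (c : ℝ) : SmoothWrt (fun _ : E => c) (fun _ => 0) :=
  of_hasFDerivAt (fun _ => le_rfl) (fun _ => hasFDerivAt_const c _) (by simp)

lemma sum {ι : Type*} (s : Finset ι) {f q : ι → E → ℝ}
    (h : ∀ i ∈ s, SmoothWrt (f i) (q i)) :
    SmoothWrt (fun x => ∑ i ∈ s, f i x) (fun x => ∑ i ∈ s, q i x) := by
  refine of_hasFDerivAt (fun d => Finset.sum_nonneg fun i hi => (h i hi).nonneg d)
    (fun u => HasFDerivAt.fun_sum fun i hi => ((h i hi).differentiable u).hasFDerivAt)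
    fun u v d => ?_
  simp only [_root_.sum_apply, ← Finset.sum_sub_distrib]
  exact Finset.sum_sq_le_sum_mul_sum_of_sq_le_mul s (fun i hi => (h i hi).nonneg _)
    (fun i hi => (h i hi).nonneg _) fun i hi => (h i hi).sq_fderiv_sub_le u v d

lemma add (hf : SmoothWrt f q) (hg : SmoothWrt g r) :
    SmoothWrt (fun x => f x + g x) (fun x => q x + r x) := by
  simpa using sum Finset.univ (f := fun b : Bool => cond b f g) (q := fun b => cond b q r)
    fun b _ => Bool.rec hg hf b

lemma const_mul (c : ℝ) (hf : SmoothWrt f q) :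
    SmoothWrt (fun x => c * f x) (fun x => |c| * q x) := by
  refine of_hasFDerivAt (fun d => mul_nonneg (abs_nonneg c) (hf.nonneg d))
    (fun u => (hf.differentiable u).hasFDerivAt.const_mul c) fun u v d => ?_
  calc (c * fderiv ℝ f u d - c * fderiv ℝ f v d) ^ 2
      = c ^ 2 * (fderiv ℝ f u d - fderiv ℝ f v d) ^ 2 := by ring
    _ ≤ c ^ 2 * (q (u - v) * q d) := by gcongr; exact hf.sq_fderiv_sub_le u v d
    _ = |c| * q (u - v) * (|c| * q d) := by rw [← sq_abs]; ring

lemma sub (hf : SmoothWrt f q) (hg : SmoothWrt g r) :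
    SmoothWrt (fun x => f x - g x) (fun x => q x + r x) := by
  simpa [sub_eq_add_neg] using hf.add (hg.const_mul (-1))

lemma mul_clm (L M : E →L[ℝ] ℝ) :
    SmoothWrt (fun x => L x * M x) (fun x => L x ^ 2 + M x ^ 2) := by
  refine of_hasFDerivAt (fun d => by positivity) (fun u => L.hasFDerivAt.mul M.hasFDerivAt)
    fun u v d => ?_
  simp only [_root_.add_apply, _root_.smul_apply, smul_eq_mul, map_sub]
  linarith [sq_nonneg ((L u - L v) * L d - (M u - M v) * M d)]

lemma sq_clm (L : E →L[ℝ] ℝ) : SmoothWrt (fun x => L x ^ 2) (fun x => 2 * L x ^ 2) := by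
  simpa only [← sq, ← two_mul] using mul_clm L L

lemma comp_clm {K : ℝ≥0} {φ : ℝ → ℝ} (hφ : Differentiable ℝ φ) (hK : LipschitzWith K (deriv φ))
    (L : E →L[ℝ] ℝ) : SmoothWrt (fun x => φ (L x)) (fun x => K * L x ^ 2) := by
  refine of_hasFDerivAt (fun d => by positivity)
    (fun u => (hφ (L u)).hasDerivAt.comp_hasFDerivAt u L.hasFDerivAt) fun u v d => ?_
  have hlip := hK.dist_le_mul (L u) (L v)
  rw [Real.dist_eq, Real.dist_eq] at hlip
  calc (deriv φ (L u) * L d - deriv φ (L v) * L d) ^ 2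
      = |deriv φ (L u) - deriv φ (L v)| ^ 2 * L d ^ 2 := by rw [sq_abs]; ring
    _ ≤ (K * |L u - L v|) ^ 2 * L d ^ 2 := by gcongr
    _ = K * L (u - v) ^ 2 * (K * L d ^ 2) := by rw [mul_pow, sq_abs, map_sub]; ring

end SmoothWrt

lemma SmoothWrt.norm_gradient_sub_le {E : Type*} [NormedAddCommGroup E] [InnerProductSpace ℝ E]
    [CompleteSpace E] {f : E → ℝ} {l : ℝ} (hf : SmoothWrt f fun d => l * ‖d‖ ^ 2) (hl : 0 ≤ l)
    (u v : E) : ‖gradient f u - gradient f v‖ ≤ l * ‖u - v‖ := by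
  rw [gradient, gradient, ← map_sub, LinearIsometryEquiv.norm_map]
  refine ContinuousLinearMap.opNorm_le_bound _ (by positivity) fun d => ?_
  refine abs_le_of_sq_le_sq ((hf.sq_fderiv_sub_le u v d).trans_eq ?_) (by positivity)
  ring

end SmoothWrt

/-! ### Bounded functions with bounded Lipschitz derivative -/

/-- `f` and its derivative are bounded by `K`, and the derivative is `K`-Lipschitz: `f` lies in the
ball of radius `K` of the space `C^{1,1}_b(ℝ)`. -/
structure IsBoundedC11 (K : ℝ≥0) (f : ℝ → ℝ) : Prop where
  differentiable : Differentiable ℝ f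
  abs_le : ∀ x, |f x| ≤ K
  abs_deriv_le : ∀ x, |deriv f x| ≤ K
  lipschitzWith_deriv : LipschitzWith K (deriv f)

namespace IsBoundedC11

variable {K : ℝ≥0} {f : ℝ → ℝ}

lemma exists_of_hasDerivAt {f' f'' : ℝ → ℝ} {C₀ C₁ C₂ : ℝ} (hf : ∀ x, HasDerivAt f (f' x) x)
    (hf' : ∀ x, HasDerivAt f' (f'' x) x) (h₀ : ∀ x, |f x| ≤ C₀) (h₁ : ∀ x, |f' x| ≤ C₁)
    (h₂ : ∀ x, |f'' x| ≤ C₂) : ∃ K, IsBoundedC11 K f := by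
  have hderiv : deriv f = f' := funext fun x => (hf x).deriv
  let K : ℝ≥0 := ⟨max C₀ (max C₁ C₂), le_max_of_le_left ((abs_nonneg _).trans (h₀ 0))⟩
  have hf'K : LipschitzWith K f' := by
    refine lipschitzWith_of_nnnorm_deriv_le (fun x => (hf' x).differentiableAt) fun x => ?_
    rw [(hf' x).deriv]
    exact (h₂ x).trans ((le_max_right ..).trans (le_max_right ..))
  refine ⟨K, fun x => (hf x).differentiableAt, fun x => (h₀ x).trans (le_max_left ..),
    fun x => ?_, by rwa [hderiv]⟩
  rw [hderiv]
  exact (h₁ x).trans ((le_max_left ..).trans (le_max_right ..))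

lemma lipschitzWith (hf : IsBoundedC11 K f) : LipschitzWith K f :=
  lipschitzWith_of_nnnorm_deriv_le hf.differentiable hf.abs_deriv_le

end IsBoundedC11

lemma abs_mul_sub_mul_le {A B : ℝ≥0} {f g : ℝ → ℝ} (hf : LipschitzWith A f) (hf' : ∀ x, |f x| ≤ A)
    (hg : LipschitzWith B g) (hg' : ∀ x, |g x| ≤ B) (x x' y y' : ℝ) :
    |f x * g y - f x' * g y'| ≤ A * B * (|x - x'| + |y - y'|) :=
  calc |f x * g y - f x' * g y'| = |(f x - f x') * g y + f x' * (g y - g y')| := by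
        congr 1; ring
    _ ≤ |f x - f x'| * |g y| + |f x'| * |g y - g y'| := by
        simpa only [abs_mul] using abs_add_le ((f x - f x') * g y) (f x' * (g y - g y'))
    _ ≤ (A * |x - x'|) * B + A * (B * |y - y'|) := by
        gcongr
        exacts [hf.dist_le_mul x x', hg' y, hf' x', hg.dist_le_mul y y']
    _ = A * B * (|x - x'| + |y - y'|) := by ring

lemma SmoothWrt.mul_comp_clm {E : Type*} [NormedAddCommGroup E] [NormedSpace ℝ E] {A B : ℝ≥0}
    {f g : ℝ → ℝ} (hf : IsBoundedC11 A f) (hg : IsBoundedC11 B g) (L M : E →L[ℝ] ℝ) :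
    SmoothWrt (fun x => f (L x) * g (M x)) (fun x => 2 * (A * B) * (L x ^ 2 + M x ^ 2)) := by
  refine of_hasFDerivAt (fun d => by positivity)
    (fun u => ((hf.differentiable (L u)).hasDerivAt.comp_hasFDerivAt u L.hasFDerivAt).mul
      ((hg.differentiable (M u)).hasDerivAt.comp_hasFDerivAt u M.hasFDerivAt)) fun u v d => ?_
  have hL := abs_mul_sub_mul_le hf.lipschitzWith_deriv hf.abs_deriv_le hg.lipschitzWith hg.abs_le
    (L u) (L v) (M u) (M v)
  have hM := abs_mul_sub_mul_le hf.lipschitzWith hf.abs_le hg.lipschitzWith_deriv hg.abs_deriv_le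
    (L u) (L v) (M u) (M v)
  set a := |L u - L v|
  set b := |M u - M v|
  have habs : |(f (L u) * deriv g (M u) - f (L v) * deriv g (M v)) * M d
      + (deriv f (L u) * g (M u) - deriv f (L v) * g (M v)) * L d|
      ≤ A * B * (a + b) * |M d| + A * B * (a + b) * |L d| := by
    refine (abs_add_le _ _).trans ?_
    rw [abs_mul, abs_mul]
    gcongr
  calc _ = |(f (L u) * deriv g (M u) - f (L v) * deriv g (M v)) * M d
      + (deriv f (L u) * g (M u) - deriv f (L v) * g (M v)) * L d| ^ 2 := by
        simp only [_root_.add_apply, _root_.smul_apply, smul_eq_mul, Function.comp_apply, sq_abs]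
        ring
    _ ≤ (A * B * (a + b) * |M d| + A * B * (a + b) * |L d|) ^ 2 := by gcongr
    _ = (A * B) ^ 2 * (a + b) ^ 2 * (|L d| + |M d|) ^ 2 := by ring
    _ ≤ (A * B) ^ 2 * (2 * (a ^ 2 + b ^ 2)) * (2 * (|L d| ^ 2 + |M d| ^ 2)) := by
        gcongr <;> exact add_sq_le
    _ = _ := by simp only [a, b, sq_abs, map_sub]; ring

/-! ### The bump `Ψ` -/

/-- The function `s ↦ s⁻ᵏ exp (-1 / s²)` on `s > 0`, extended by zero. This family is closed
under differentiation up to linear combinations, and contains `Ψ` up to the substitution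
`s = 2x - 1`. -/
noncomputable def flatExp (k : ℕ) (s : ℝ) : ℝ :=
  if s ≤ 0 then 0 else Real.exp (-1 / s ^ 2) / s ^ k

lemma flatExp_of_nonpos (k : ℕ) {s : ℝ} (hs : s ≤ 0) : flatExp k s = 0 := if_pos hs

lemma flatExp_of_pos (k : ℕ) {s : ℝ} (hs : 0 < s) :
    flatExp k s = Real.exp (-1 / s ^ 2) / s ^ k := if_neg hs.not_ge

lemma flatExp_nonneg (k : ℕ) (s : ℝ) : 0 ≤ flatExp k s := by
  unfold flatExp
  split_ifs with hs
  · exact le_rfl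
  · have : 0 < s := not_le.1 hs
    positivity

lemma flatExp_eq_pow_mul (k m : ℕ) (s : ℝ) : flatExp k s = s ^ m * flatExp (k + m) s := by
  rcases le_or_gt s 0 with hs | hs
  · simp only [flatExp_of_nonpos _ hs, mul_zero]
  · rw [flatExp_of_pos _ hs, flatExp_of_pos _ hs]
    field_simp
    ring

lemma flatExp_le (k : ℕ) (s : ℝ) : flatExp k s ≤ k.factorial * Real.exp 1 := by
  rcases le_or_gt s 0 with hs | hs
  · rw [flatExp_of_nonpos k hs]
    positivity
  · have hpow : s⁻¹ ^ k ≤ k.factorial * Real.exp s⁻¹ := by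
      have := Real.pow_div_factorial_le_exp s⁻¹ (by positivity) k
      rwa [div_le_iff₀' (by positivity)] at this
    calc flatExp k s = s⁻¹ ^ k * Real.exp (-s⁻¹ ^ 2) := by
          rw [flatExp_of_pos k hs, inv_pow, inv_pow, neg_div, one_div]; ring
      _ ≤ k.factorial * Real.exp s⁻¹ * Real.exp (-s⁻¹ ^ 2) := by gcongr
      _ = k.factorial * Real.exp (s⁻¹ - s⁻¹ ^ 2) := by
          rw [mul_assoc, ← Real.exp_add, sub_eq_add_neg]
      _ ≤ k.factorial * Real.exp 1 := by
          gcongr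
          nlinarith [sq_nonneg (s⁻¹ - 1)]

lemma hasDerivAt_flatExp_zero (k : ℕ) : HasDerivAt (flatExp k) 0 0 := by
  have hO : flatExp k =O[nhds 0] fun s => ‖s - 0‖ ^ 2 := by
    refine .of_bound ((k + 2).factorial * Real.exp 1) (.of_forall fun s => ?_)
    rw [flatExp_eq_pow_mul k 2, sub_zero, norm_mul, norm_pow, norm_pow, norm_norm,
      Real.norm_of_nonneg (flatExp_nonneg ..), mul_comm]
    gcongr
    exact flatExp_le (k + 2) s
  simpa using (hO.hasFDerivAt one_lt_two).hasDerivAt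

lemma hasDerivAt_flatExp (k : ℕ) (s : ℝ) :
    HasDerivAt (flatExp k) (2 * flatExp (k + 3) s - k * flatExp (k + 1) s) s := by
  rcases lt_trichotomy s 0 with hs | rfl | hs
  · simp only [flatExp_of_nonpos _ hs.le, mul_zero, sub_zero]
    refine (hasDerivAt_const s (0 : ℝ)).congr_of_eventuallyEq ?_
    filter_upwards [Iio_mem_nhds hs] with t ht using flatExp_of_nonpos k ht.le
  · simpa [flatExp_of_nonpos] using hasDerivAt_flatExp_zero k
  · have hexponent : HasDerivAt (fun t : ℝ => -1 / t ^ 2) (2 / s ^ 3) s := by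
      refine ((hasDerivAt_const s (-1 : ℝ)).fun_div (hasDerivAt_pow 2 s)
        (by positivity)).congr_deriv ?_
      push_cast
      field_simp
      ring
    have heq : flatExp k =ᶠ[nhds s] fun t => Real.exp (-1 / t ^ 2) / t ^ k := by
      filter_upwards [Ioi_mem_nhds hs] with t ht using flatExp_of_pos k ht
    refine ((hexponent.exp.fun_div (hasDerivAt_pow k s)
      (by positivity)).congr_of_eventuallyEq heq).congr_deriv ?_
    rw [flatExp_of_pos _ hs, flatExp_of_pos _ hs]
    rcases k with _ | k
    · simp only [Nat.cast_zero, pow_zero, zero_mul, mul_zero, sub_zero, mul_one, one_pow, div_one,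
        zero_add]
      field_simp
    · rw [Nat.add_sub_cancel]
      field_simp
      ring

lemma hasDerivAt_flatExp_comp (k : ℕ) (x : ℝ) :
    HasDerivAt (fun x => flatExp k (2 * x - 1))
      ((2 * flatExp (k + 3) (2 * x - 1) - k * flatExp (k + 1) (2 * x - 1)) * 2) x :=
  (hasDerivAt_flatExp k _).comp x <| by
    simpa using ((hasDerivAt_id x).const_mul 2).sub_const 1

lemma Psi_eq_flatExp (x : ℝ) : Psi x = Real.exp 1 * flatExp 0 (2 * x - 1) := by
  rcases le_or_gt x (1 / 2) with hx | hx
  · rw [Psi, if_pos hx, flatExp_of_nonpos 0 (by linarith), mul_zero]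
  · rw [Psi, if_neg hx.not_ge, flatExp_of_pos 0 (by linarith), pow_zero, div_one, ← Real.exp_add]
    ring_nf

lemma exists_isBoundedC11_Psi : ∃ K, IsBoundedC11 K Psi := by
  have hbound (k x) : |flatExp k (2 * x - 1)| ≤ k.factorial * Real.exp 1 :=
    (abs_of_nonneg (flatExp_nonneg ..)).trans_le (flatExp_le ..)
  refine IsBoundedC11.exists_of_hasDerivAt
    (f' := fun x => Real.exp 1 * (4 * flatExp 3 (2 * x - 1)))
    (f'' := fun x => Real.exp 1 * (16 * flatExp 6 (2 * x - 1) - 24 * flatExp 4 (2 * x - 1)))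
    (C₀ := Real.exp 1 * (Nat.factorial 0 * Real.exp 1))
    (C₁ := Real.exp 1 * (4 * (Nat.factorial 3 * Real.exp 1)))
    (C₂ := Real.exp 1 * (16 * (Nat.factorial 6 * Real.exp 1)
      + 24 * (Nat.factorial 4 * Real.exp 1)))
    (fun x => ?_) (fun x => ?_) (fun x => ?_) (fun x => ?_) (fun x => ?_)
  · rw [funext Psi_eq_flatExp]
    refine ((hasDerivAt_flatExp_comp 0 x).const_mul _).congr_deriv ?_
    push_cast; ring
  · refine (((hasDerivAt_flatExp_comp 3 x).const_mul 4).const_mul _).congr_deriv ?_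
    push_cast; ring
  · rw [Psi_eq_flatExp, abs_mul, Real.abs_exp]
    gcongr
    exact hbound 0 x
  · rw [abs_mul, abs_mul, Real.abs_exp, Nat.abs_ofNat]
    gcongr
    exact hbound 3 x
  · rw [abs_mul, Real.abs_exp]
    gcongr
    refine (abs_sub _ _).trans ?_
    rw [abs_mul, abs_mul, Nat.abs_ofNat, Nat.abs_ofNat]
    gcongr
    exacts [hbound 6 x, hbound 4 x]

/-! ### The Gaussian primitive `Φ` -/

lemma hasDerivAt_integral_Iic {E : Type*} [NormedAddCommGroup E] [NormedSpace ℝ E] [CompleteSpace E]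
    {f : ℝ → E} (hf : MeasureTheory.Integrable f) {x : ℝ} (hx : ContinuousAt f x) :
    HasDerivAt (fun x => ∫ t in Set.Iic x, f t) (f x) x := by
  have hsplit : (fun x => ∫ t in Set.Iic x, f t)
      = fun x => (∫ t in Set.Iic 0, f t) + ∫ t in (0 : ℝ)..x, f t := by
    funext y
    rw [← intervalIntegral.integral_Iic_sub_Iic hf.integrableOn hf.integrableOn, add_sub_cancel]
  rw [hsplit]
  exact (intervalIntegral.integral_hasDerivAt_right hf.intervalIntegrable
    hf.aestronglyMeasurable.stronglyMeasurableAtFilter hx).const_add _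

lemma integrable_exp_neg_sq_div_two :
    MeasureTheory.Integrable fun t : ℝ => Real.exp (-t ^ 2 / 2) := by
  refine (integrable_exp_neg_mul_sq (b := 1 / 2) (by norm_num)).congr (.of_forall fun t => ?_)
  ring_nf

lemma exp_neg_sq_div_two_mul_abs_le_one (x : ℝ) : Real.exp (-x ^ 2 / 2) * |x| ≤ 1 := by
  have hx : |x| ≤ Real.exp (x ^ 2 / 2) := by
    nlinarith [Real.add_one_le_exp (x ^ 2 / 2), sq_abs x, sq_nonneg (|x| - 1)]
  calc Real.exp (-x ^ 2 / 2) * |x| ≤ Real.exp (-x ^ 2 / 2) * Real.exp (x ^ 2 / 2) := by gcongr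
    _ = 1 := by rw [← Real.exp_add, neg_div, neg_add_cancel, Real.exp_zero]

lemma exists_isBoundedC11_Phi : ∃ K, IsBoundedC11 K Phi := by
  refine IsBoundedC11.exists_of_hasDerivAt
    (f' := fun x => √(Real.exp 1) * Real.exp (-x ^ 2 / 2))
    (f'' := fun x => √(Real.exp 1) * (Real.exp (-x ^ 2 / 2) * -x))
    (C₀ := √(Real.exp 1) * ∫ t, Real.exp (-t ^ 2 / 2))
    (C₁ := √(Real.exp 1) * 1) (C₂ := √(Real.exp 1) * 1)
    (fun x => ?_) (fun x => ?_) (fun x => ?_) (fun x => ?_) (fun x => ?_)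
  · refine (hasDerivAt_integral_Iic integrable_exp_neg_sq_div_two ?_).const_mul _
    fun_prop
  · refine HasDerivAt.const_mul _ (HasDerivAt.exp ?_)
    refine ((hasDerivAt_pow 2 x).neg.div_const 2).congr_deriv ?_
    push_cast
    ring
  · rw [Phi, abs_mul, abs_of_nonneg (Real.sqrt_nonneg _), abs_of_nonneg
      (MeasureTheory.integral_nonneg fun t => (Real.exp_pos _).le)]
    exact mul_le_mul_of_nonneg_left (MeasureTheory.setIntegral_le_integral
      integrable_exp_neg_sq_div_two (.of_forall fun t => (Real.exp_pos _).le)) (Real.sqrt_nonneg _)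
  · rw [abs_mul, Real.abs_exp, abs_of_nonneg (Real.sqrt_nonneg _)]
    gcongr
    exact Real.exp_le_one_iff.2 (by linarith [sq_nonneg x])
  · rw [abs_mul, abs_mul, abs_neg, Real.abs_exp, abs_of_nonneg (Real.sqrt_nonneg _)]
    gcongr
    exact exp_neg_sq_div_two_mul_abs_le_one x

/-! ### The first column of `B` -/

/-- The solution of the recurrence given by the interior rows of `(α I + A) v = 0`, with the values
at the end `yₙ` of the path prescribed by the last row: `pathSeq α k` is the entry at distance `k`
from that end, normalised to `1` at the end itself. -/
noncomputable def pathSeq (α : ℝ) : ℕ → ℝ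
  | 0 => 1
  | 1 => 1 + α
  | k + 2 => (2 + α) * pathSeq α (k + 1) - pathSeq α k

section pathSeq

variable {α : ℝ}

-- The recurrence, summed over the last `k + 1` rows: there the contributions of `A` telescope.
lemma pathSeq_succ (α : ℝ) (k : ℕ) :
    pathSeq α (k + 1) = pathSeq α k + α * ∑ i ∈ Finset.range (k + 1), pathSeq α i := by
  induction k with
  | zero => simp [pathSeq]
  | succ k ih =>
    rw [Finset.sum_range_succ, mul_add, pathSeq]
    linarith

lemma pathSeq_pos (hα : 0 ≤ α) (k : ℕ) : 0 < pathSeq α k := by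
  induction k using Nat.strong_induction_on with
  | _ k ih =>
    cases k with
    | zero => exact one_pos
    | succ k =>
      rw [pathSeq_succ]
      have := ih k k.lt_succ_self
      have := Finset.sum_nonneg fun i hi => (ih i (Finset.mem_range.1 hi)).le
      positivity

lemma pathSeq_monotone (hα : 0 ≤ α) : Monotone (pathSeq α) :=
  monotone_nat_of_le_succ fun k => by
    rw [pathSeq_succ]
    exact le_add_of_nonneg_right
      (mul_nonneg hα (Finset.sum_nonneg fun i _ => (pathSeq_pos hα i).le))

lemma one_le_pathSeq (hα : 0 ≤ α) (k : ℕ) : 1 ≤ pathSeq α k :=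
  pathSeq_monotone hα k.zero_le

lemma sum_range_pathSeq_le (hα : 0 ≤ α) (k : ℕ) :
    ∑ i ∈ Finset.range (k + 1), pathSeq α i ≤ (k + 1) * pathSeq α k := by
  simpa using Finset.sum_le_card_nsmul (Finset.range (k + 1)) (pathSeq α) _ fun i hi =>
    pathSeq_monotone hα (Nat.lt_succ_iff.1 (Finset.mem_range.1 hi))

lemma pathSeq_le_exp (hα : 0 ≤ α) (k : ℕ) : pathSeq α k ≤ Real.exp (α * k ^ 2) := by
  induction k with
  | zero => simp [pathSeq]
  | succ k ih =>
    calc pathSeq α (k + 1) ≤ pathSeq α k + α * ((k + 1) * pathSeq α k) := by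
          rw [pathSeq_succ]
          gcongr
          exact sum_range_pathSeq_le hα k
      _ = pathSeq α k * (α * (k + 1) + 1) := by ring
      _ ≤ Real.exp (α * k ^ 2) * Real.exp (α * (k + 1)) := by
          gcongr
          exact Real.add_one_le_exp _
      _ ≤ Real.exp (α * (k + 1 : ℕ) ^ 2) := by
          rw [← Real.exp_add, ← mul_add]
          gcongr
          push_cast
          linarith [k.cast_nonneg (α := ℝ)]

end pathSeq

-- `A` is the Laplacian of the path on `n ≥ 2` vertices.
lemma triA_mulVec_apply {n : ℕ} (hn : 2 ≤ n) (v : ℕ → ℝ) (i : Fin n) :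
    (triA n *ᵥ fun j => v j) i = (if 0 < (i : ℕ) then v i - v (i - 1) else 0)
      + (if (i : ℕ) + 1 < n then v i - v (i + 1) else 0) := by
  have hentry (j : Fin n) : triA n i j * v j
      = (if (i : ℕ) = j then ((if 0 < (i : ℕ) then 1 else 0)
          + if (i : ℕ) + 1 < n then 1 else 0) * v j else 0)
        - (if (i : ℕ) - 1 = j then (if 0 < (i : ℕ) then v j else 0) else 0)
        - (if (i : ℕ) + 1 = j then (if (i : ℕ) + 1 < n then v j else 0) else 0) := by
    simp only [triA, Matrix.of_apply, Fin.ext_iff]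
    split_ifs <;> first | omega | norm_num
  have hsum (k : ℕ) (g : ℕ → ℝ) : ∑ j : Fin n, (if k = j then g j else 0)
      = if k < n then g k else 0 := by
    rw [Fin.sum_univ_eq_sum_range fun j => if k = j then g j else 0, Finset.sum_ite_eq]
    simp only [Finset.mem_range]
  rw [Matrix.mulVec, dotProduct, Finset.sum_congr rfl fun j _ => hentry j,
    Finset.sum_sub_distrib, Finset.sum_sub_distrib, hsum i fun j => _ * v j,
    hsum (i - 1) fun j => if 0 < (i : ℕ) then v j else 0,
    hsum (i + 1) fun j => if (i : ℕ) + 1 < n then v j else 0]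
  have hpred : (i : ℕ) - 1 < n := by omega
  simp only [i.isLt, hpred, if_true]
  split_ifs <;> ring

lemma triA_mulVec_one {n : ℕ} (hn : 2 ≤ n) : triA n *ᵥ 1 = 0 := by
  funext i
  exact (triA_mulVec_apply hn (fun _ => 1) i).trans (by simp)

lemma isUnit_det_smul_one_add_triA {n : ℕ} (hn : 2 ≤ n) {α : ℝ} (hα : 0 < α) :
    IsUnit (α • (1 : Matrix (Fin n) (Fin n) ℝ) + triA n).det := by
  refine (det_ne_zero_of_sum_row_lt_diag fun i => ?_).isUnit
  have hdiag : 0 ≤ triA n i i := by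
    simp only [triA, Matrix.of_apply]
    split_ifs <;> norm_num
  have hoff (j) (hj : j ∈ Finset.univ.erase i) :
      ‖(α • (1 : Matrix (Fin n) (Fin n) ℝ) + triA n) i j‖ = -triA n i j := by
    have hij : i ≠ j := (Finset.ne_of_mem_erase hj).symm
    simp only [Matrix.add_apply, Matrix.smul_apply, Matrix.one_apply_ne hij, smul_zero, zero_add]
    refine (Real.norm_of_nonpos ?_)
    simp only [triA, Matrix.of_apply, if_neg hij]
    split_ifs <;> norm_num
  have hrow : triA n i i + ∑ j ∈ Finset.univ.erase i, triA n i j = 0 := by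
    rw [Finset.add_sum_erase _ _ (Finset.mem_univ i)]
    simpa [Matrix.mulVec, dotProduct] using congrFun (triA_mulVec_one hn) i
  rw [Finset.sum_congr rfl hoff, Finset.sum_neg_distrib, Matrix.add_apply, Matrix.smul_apply,
    Matrix.one_apply_eq, smul_eq_mul, mul_one, Real.norm_of_nonneg (by positivity)]
  linarith

lemma smul_one_add_triA_mulVec_pathSeq {n : ℕ} (hn : 2 ≤ n) (α : ℝ) :
    (α • (1 : Matrix (Fin n) (Fin n) ℝ) + triA n) *ᵥ (fun i => pathSeq α (n - 1 - i))
      = Pi.single ⟨0, by omega⟩ (α * ∑ k ∈ Finset.range n, pathSeq α k) := by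
  funext ⟨i, hi⟩
  have hprev : (if 0 < i then pathSeq α (n - 1 - i) - pathSeq α (n - 1 - (i - 1)) else 0)
      = if 0 < i then -(α * ∑ k ∈ Finset.range (n - 1 - i + 1), pathSeq α k) else 0 := by
    split_ifs with h
    · rw [show n - 1 - (i - 1) = n - 1 - i + 1 by omega, pathSeq_succ]
      ring
    · rfl
  have hnext : (if i + 1 < n then pathSeq α (n - 1 - i) - pathSeq α (n - 1 - (i + 1)) else 0)
      = α * ∑ k ∈ Finset.range (n - 1 - i), pathSeq α k := by
    split_ifs with h
    · rw [show n - 1 - i = n - 1 - (i + 1) + 1 by omega, pathSeq_succ, add_sub_cancel_left]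
    · rw [show n - 1 - i = 0 by omega, Finset.sum_range_zero, mul_zero]
  rw [Matrix.add_mulVec, Matrix.smul_mulVec, Matrix.one_mulVec, Pi.add_apply, Pi.smul_apply,
    triA_mulVec_apply hn (fun j => pathSeq α (n - 1 - j)), smul_eq_mul, hprev, hnext,
    Pi.single_apply, Finset.sum_range_succ]
  simp only [Fin.mk.injEq]
  rcases i.eq_zero_or_pos with rfl | hpos
  · rw [if_neg (lt_irrefl 0), if_pos rfl, Nat.sub_zero, ← Nat.sub_add_cancel (show 1 ≤ n by omega),
      Finset.sum_range_succ, Nat.add_sub_cancel]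
    ring
  · rw [if_pos hpos, if_neg hpos.ne']
    ring

lemma Bmat_apply_zero {n : ℕ} (hn : 2 ≤ n) {α : ℝ} (hα : 0 < α) (i : Fin n) :
    Bmat n α i ⟨0, by omega⟩
      = pathSeq α (n - 1 - i) / (α * ∑ k ∈ Finset.range n, pathSeq α k) := by
  have hsum : 0 < ∑ k ∈ Finset.range n, pathSeq α k :=
    Finset.sum_pos (fun k _ => pathSeq_pos hα.le k) (Finset.nonempty_range_iff.2 (by omega))
  have hcol := congrArg (Bmat n α *ᵥ ·) (smul_one_add_triA_mulVec_pathSeq hn α)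
  simp only [Bmat, Matrix.mulVec_mulVec,
    Matrix.nonsing_inv_mul _ (isUnit_det_smul_one_add_triA hn hα), Matrix.one_mulVec] at hcol
  rw [eq_div_iff (by positivity)]
  simpa [Bmat] using (congrFun hcol i).symm

section Coefficients

variable {n : ℕ}

lemma pathSeq_inv_sq_le_three (hn : 2 ≤ n) : pathSeq (((n : ℝ) ^ 2)⁻¹) (n - 1) ≤ 3 :=
  calc pathSeq (((n : ℝ) ^ 2)⁻¹) (n - 1)
      ≤ pathSeq (((n : ℝ) ^ 2)⁻¹) n := pathSeq_monotone (by positivity) (n.sub_le 1)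
    _ ≤ Real.exp (((n : ℝ) ^ 2)⁻¹ * n ^ 2) := pathSeq_le_exp (by positivity) n
    _ = Real.exp 1 := by rw [inv_mul_cancel₀ (by positivity)]
    _ ≤ 3 := Real.exp_one_lt_three.le

lemma Bmat_last_zero (hn : 2 ≤ n) {α : ℝ} (hα : 0 < α) :
    Bmat n α ⟨n - 1, by omega⟩ ⟨0, by omega⟩ = 1 / (α * ∑ k ∈ Finset.range n, pathSeq α k) := by
  rw [Bmat_apply_zero hn hα, Nat.sub_self, pathSeq]

lemma Bmat_zero_zero (hn : 2 ≤ n) {α : ℝ} (hα : 0 < α) :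
    Bmat n α ⟨0, by omega⟩ ⟨0, by omega⟩
      = pathSeq α (n - 1) * Bmat n α ⟨n - 1, by omega⟩ ⟨0, by omega⟩ := by
  rw [Bmat_last_zero hn hα, Bmat_apply_zero hn hα, Nat.sub_zero, mul_one_div]

lemma one_third_le_Bmat_last_zero_div (hn : 2 ≤ n) :
    1 / 3 ≤ Bmat n (((n : ℝ) ^ 2)⁻¹) ⟨n - 1, by omega⟩ ⟨0, by omega⟩ / n := by
  have hα : 0 < ((n : ℝ) ^ 2)⁻¹ := by positivity
  have hsum : ∑ k ∈ Finset.range n, pathSeq (((n : ℝ) ^ 2)⁻¹) k ≤ n * 3 := by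
    have h := sum_range_pathSeq_le hα.le (n - 1)
    rw [Nat.sub_add_cancel (by omega), Nat.cast_pred (by omega), sub_add_cancel] at h
    exact h.trans (by gcongr; exact pathSeq_inv_sq_le_three hn)
  have hpos : 0 < ∑ k ∈ Finset.range n, pathSeq (((n : ℝ) ^ 2)⁻¹) k :=
    Finset.sum_pos (fun k _ => pathSeq_pos hα.le k) (Finset.nonempty_range_iff.2 (by omega))
  calc (1 / 3 : ℝ) = 1 / (((n : ℝ) ^ 2)⁻¹ * (n * 3)) / n := by field_simp
    _ ≤ 1 / (((n : ℝ) ^ 2)⁻¹ * ∑ k ∈ Finset.range n, pathSeq (((n : ℝ) ^ 2)⁻¹) k) / n := by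
      gcongr
    _ = _ := by rw [Bmat_last_zero hn hα]

lemma sqrt_twelve_div_div_le_six (hn : 1 ≤ n) {a : ℝ} (ha : 1 / 3 ≤ a) : √(12 / a / n) ≤ 6 := by
  rw [Real.sqrt_le_left (by norm_num), div_div, div_le_iff₀ (by positivity)]
  have : (1 : ℝ) ≤ n := mod_cast hn
  nlinarith

end Coefficients

lemma abs_twelve_div_mul_sub_mul_le {a p : ℝ} (ha : a ≠ 0) (hp : 1 ≤ p) (hp' : p ≤ 3) :
    |12 / a * (a - p * a)| ≤ 24 := by
  rw [show 12 / a * (a - p * a) = 12 * (1 - p) by field_simp, abs_le]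
  constructor <;> linarith

/-! ### The components of `f̄` -/

lemma sum_dite_sq_succ_le {n : ℕ} (y : Fin n → ℝ) :
    ∑ i : Fin n, (if h : (i : ℕ) + 1 < n then y ⟨i + 1, h⟩ ^ 2 else 0) ≤ ∑ i, y i ^ 2 := by
  cases n with
  | zero => simp
  | succ n =>
    rw [Fin.sum_univ_castSucc, Fin.sum_univ_succ fun i => y i ^ 2]
    simpa [Fin.succ] using sq_nonneg (y 0)

lemma sum_dite_sq_sub_succ_le {n : ℕ} (y : Fin n → ℝ) :
    ∑ i : Fin n, (if h : (i : ℕ) + 1 < n then (y i - y ⟨i + 1, h⟩) ^ 2 else 0)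
      ≤ 4 * ∑ i, y i ^ 2 :=
  calc _ ≤ ∑ i : Fin n, (2 * y i ^ 2
          + 2 * if h : (i : ℕ) + 1 < n then y ⟨i + 1, h⟩ ^ 2 else 0) := by
        gcongr with i
        split_ifs with h
        · linarith [sq_nonneg (y i + y ⟨i + 1, h⟩)]
        · positivity
    _ = 2 * ∑ i, y i ^ 2
          + 2 * ∑ i : Fin n, (if h : (i : ℕ) + 1 < n then y ⟨i + 1, h⟩ ^ 2 else 0) := by
        rw [Finset.sum_add_distrib, Finset.mul_sum, Finset.mul_sum]
    _ ≤ 2 * ∑ i, y i ^ 2 + 2 * ∑ i, y i ^ 2 := by grw [sum_dite_sq_succ_le y]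
    _ = 4 * ∑ i, y i ^ 2 := by ring

lemma sum_sq_comp_le_norm_sq {ι κ : Type*} [Fintype ι] [Fintype κ] {φ : ι → κ}
    (hφ : φ.Injective) (w : EuclideanSpace ℝ κ) :
    ∑ i, w (φ i) ^ 2 ≤ ‖w‖ ^ 2 := by
  calc ∑ i, w (φ i) ^ 2 = ∑ k ∈ Finset.univ.map ⟨φ, hφ⟩, w k ^ 2 := by
        rw [Finset.sum_map, Function.Embedding.coeFn_mk]
    _ ≤ ∑ k, w k ^ 2 := Finset.sum_le_univ_sum_of_nonneg fun k => sq_nonneg (w k)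
    _ = ‖w‖ ^ 2 := (EuclideanSpace.real_norm_sq_eq w).symm

namespace SmoothWrt

section

variable {E : Type*} [NormedAddCommGroup E] [NormedSpace ℝ E]

lemma sum_dite_sq_sub_succ {n : ℕ} (Y : Fin n → E →L[ℝ] ℝ) :
    SmoothWrt
      (fun u => ∑ i : Fin n, if h : (i : ℕ) + 1 < n then (Y i u - Y ⟨i + 1, h⟩ u) ^ 2 else 0)
      (fun u => 8 * ∑ i, Y i u ^ 2) := by
  have hterm (i : Fin n) : SmoothWrt
      (fun u => if h : (i : ℕ) + 1 < n then (Y i u - Y ⟨i + 1, h⟩ u) ^ 2 else 0)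
      (fun u => 2 * if h : (i : ℕ) + 1 < n then (Y i u - Y ⟨i + 1, h⟩ u) ^ 2 else 0) := by
    split_ifs with h
    · exact sq_clm (Y i - Y ⟨i + 1, h⟩)
    · simpa using const (E := E) 0
  refine (sum Finset.univ fun i _ => hterm i).mono fun d => ?_
  rw [← Finset.mul_sum]
  linarith [sum_dite_sq_sub_succ_le fun i => Y i d]

lemma hfun_clm {n : ℕ} (hn : 0 < n) (C : ℝ) (X Z : E →L[ℝ] ℝ) (Y : Fin n → E →L[ℝ] ℝ) :
    SmoothWrt (fun u => hfun n hn C (X u) (Z u) fun k => Y k u)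
      (fun u => (5 + 2 * √(C / n)) * (X u ^ 2 + Z u ^ 2 + ∑ k, Y k u ^ 2)) := by
  have hnorm := (sum Finset.univ fun k _ => sq_clm (Y k)).const_mul (1 / (2 * (n : ℝ) ^ 2))
  have hends := ((mul_clm X (Y ⟨0, hn⟩)).sub
    (mul_clm ((1 / 2 : ℝ) • Z) (Y ⟨n - 1, by omega⟩))).const_mul √(C / n)
  refine ((((sum_dite_sq_sub_succ Y).const_mul (-(1 / 2))).sub hnorm).add hends).mono fun d => ?_
  have hY (k : Fin n) : Y k d ^ 2 ≤ ∑ k, Y k d ^ 2 :=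
    Finset.single_le_sum (fun k _ => sq_nonneg (Y k d)) (Finset.mem_univ k)
  have hinv : |1 / (2 * (n : ℝ) ^ 2)| ≤ 1 / 2 := by
    have : (1 : ℝ) ≤ n := mod_cast hn
    rw [abs_of_pos (by positivity)]
    gcongr
    nlinarith
  have hsqrt := Real.sqrt_nonneg (C / n)
  rw [← Finset.mul_sum, abs_neg, abs_of_pos (one_half_pos (α := ℝ)), abs_of_nonneg hsqrt]
  simp only [_root_.smul_apply, smul_eq_mul]
  set S := ∑ k, Y k d ^ 2
  calc _ ≤ 1 / 2 * (8 * S) + 1 / 2 * (2 * S)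
          + √(C / n) * (X d ^ 2 + S + ((1 / 2 * Z d) ^ 2 + S)) := by
        gcongr
        exacts [hY _, hY _]
    _ ≤ _ := by
        linarith [sq_nonneg (X d), sq_nonneg (Z d), mul_nonneg hsqrt (sq_nonneg (X d)),
          mul_nonneg hsqrt (sq_nonneg (Z d))]

end

section EuclideanSpace

variable {ι κ : Type*} [Fintype ι] [Fintype κ]

lemma sum_mul_sq_proj {φ : ι → κ} (hφ : φ.Injective) (c : ℝ) :
    SmoothWrt (fun w : EuclideanSpace ℝ κ => ∑ i, c * w (φ i) ^ 2)
      (fun w => 2 * |c| * ‖w‖ ^ 2) := by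
  refine (sum Finset.univ fun i _ => (sq_clm (EuclideanSpace.proj (φ i))).const_mul c).mono
    fun d => ?_
  rw [← Finset.mul_sum, ← Finset.mul_sum, mul_left_comm, ← mul_assoc]
  gcongr
  exact sum_sq_comp_le_norm_sq hφ d

lemma sum_reflect_mul_sub {A B : ℝ≥0} {f g : ℝ → ℝ} (hf : IsBoundedC11 A f)
    (hg : IsBoundedC11 B g) {ζ ξ : ι → κ} (hζ : ζ.Injective) (hξ : ξ.Injective) :
    SmoothWrt (fun w : EuclideanSpace ℝ κ =>
        ∑ i, (f (-w (ζ i)) * g (-w (ξ i)) - f (w (ζ i)) * g (w (ξ i))))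
      (fun w => 8 * (A * B) * ‖w‖ ^ 2) := by
  let z (i : ι) : EuclideanSpace ℝ κ →L[ℝ] ℝ := EuclideanSpace.proj (ζ i)
  let x (i : ι) : EuclideanSpace ℝ κ →L[ℝ] ℝ := EuclideanSpace.proj (ξ i)
  refine (sum Finset.univ fun i _ => (mul_comp_clm hf hg (-z i) (-x i)).sub
    (mul_comp_clm hf hg (z i) (x i))).mono fun d => ?_
  calc _ = 4 * (A * B) * (∑ i, d (ζ i) ^ 2 + ∑ i, d (ξ i) ^ 2) := by
        rw [← Finset.sum_add_distrib, Finset.mul_sum]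
        refine Finset.sum_congr rfl fun i _ => ?_
        simp only [z, x, _root_.neg_apply, PiLp.proj_apply, neg_sq]
        ring
    _ ≤ 4 * (A * B) * (‖d‖ ^ 2 + ‖d‖ ^ 2) := by
        gcongr <;> exact sum_sq_comp_le_norm_sq ‹_› d
    _ = 8 * (A * B) * ‖d‖ ^ 2 := by ring

lemma sum_hfun_proj {n : ℕ} (hn : 0 < n) (C : ℝ) {ξ ζ : ι → κ} {η : ι × Fin n → κ}
    (hξ : ξ.Injective) (hζ : ζ.Injective) (hη : η.Injective) :
    SmoothWrt (fun w : EuclideanSpace ℝ κ =>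
        ∑ i, hfun n hn C (w (ξ i)) (w (ζ i)) fun k => w (η (i, k)))
      (fun w => 3 * (5 + 2 * √(C / n)) * ‖w‖ ^ 2) := by
  refine (sum Finset.univ fun i _ => hfun_clm hn C (EuclideanSpace.proj (ξ i))
    (EuclideanSpace.proj (ζ i)) fun k => EuclideanSpace.proj (η (i, k))).mono fun d => ?_
  calc _ = (5 + 2 * √(C / n))
          * (∑ i, d (ξ i) ^ 2 + ∑ i, d (ζ i) ^ 2 + ∑ p, d (η p) ^ 2) := by
        simp only [← Finset.mul_sum, Finset.sum_add_distrib, Fintype.sum_prod_type,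
          PiLp.proj_apply]
    _ ≤ (5 + 2 * √(C / n)) * (‖d‖ ^ 2 + ‖d‖ ^ 2 + ‖d‖ ^ 2) := by
        gcongr <;> exact sum_sq_comp_le_norm_sq ‹_› d
    _ = 3 * (5 + 2 * √(C / n)) * ‖d‖ ^ 2 := by ring

end EuclideanSpace

end SmoothWrt

lemma smoothWrt_fbarE {A B : ℝ≥0} (hΨ : IsBoundedC11 A Psi) (hΦ : IsBoundedC11 B Phi)
    {n T : ℕ} (hn : 0 < n) (hT : 2 ≤ T) (C c1 c2 : ℝ) :
    SmoothWrt (fbarE n T hn hT C c1 c2) (fun w => (|Psi 1| * B + 8 * (A * B)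
      + 3 * (5 + 2 * √(C / n)) + 2 * |c1| + 2 * |c2|) * ‖w‖ ^ 2) := by
  let κ := Fin T ⊕ (Fin (T - 1) ⊕ Fin (T - 1) × Fin n)
  have hx : Function.Injective fun j : Fin (T - 1) => (.inl ⟨j, by omega⟩ : κ) :=
    fun _ _ h => Fin.ext (Fin.mk.inj (Sum.inl.inj h))
  have hx' : Function.Injective fun j : Fin (T - 1) => (.inl ⟨j + 1, by omega⟩ : κ) :=
    fun _ _ h => Fin.ext (Nat.succ.inj (Fin.mk.inj (Sum.inl.inj h)))
  have hz : Function.Injective fun j : Fin (T - 1) => (.inr (.inl j) : κ) :=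
    Sum.inr_injective.comp Sum.inl_injective
  have hy : Function.Injective fun p : Fin (T - 1) × Fin n => (.inr (.inr p) : κ) :=
    Sum.inr_injective.comp Sum.inr_injective
  have hhead := (SmoothWrt.comp_clm hΦ.differentiable hΦ.lipschitzWith_deriv
    (EuclideanSpace.proj (Sum.inl ⟨0, by omega⟩ : κ))).const_mul (-Psi 1)
  have hquad := (SmoothWrt.sum_mul_sq_proj hx c1).add (SmoothWrt.sum_mul_sq_proj hz c2)
  simp only [← Finset.sum_add_distrib] at hquad
  refine (((hhead.add (.sum_reflect_mul_sub hΨ hΦ hz hx')).add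
    (.sum_hfun_proj hn C hx hz hy)).add hquad).mono fun d => ?_
  have hd : d (Sum.inl ⟨0, by omega⟩ : κ) ^ 2 ≤ ‖d‖ ^ 2 := by
    rw [← sq_abs]
    gcongr
    exact PiLp.norm_apply_le d _
  have := mul_le_mul_of_nonneg_left hd (show 0 ≤ |Psi 1| * B by positivity)
  simp only [abs_neg, PiLp.proj_apply]
  linarith

theorem stmt_10_general :
    ∃ ℓ0 : ℝ, 0 < ℓ0 ∧
      ∀ (n T : ℕ) (hn : 2 ≤ n) (hT : 2 ≤ T) (a1 a2 C c1 c2 : ℝ),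
        a1 = Bmat n (((n : ℝ) ^ 2)⁻¹) ⟨0, by omega⟩ ⟨0, by omega⟩ / n →
        a2 = Bmat n (((n : ℝ) ^ 2)⁻¹) ⟨n - 1, by omega⟩ ⟨0, by omega⟩ / n →
        C = 12 / a2 → c1 = C * (a2 - a1) / 2 → c2 = C * (a2 - a1) / 8 →
        ∀ u v : EuclideanSpace ℝ (Fin T ⊕ (Fin (T - 1) ⊕ Fin (T - 1) × Fin n)),
          ‖gradient (fbarE n T (by omega) hT C c1 c2) u
              - gradient (fbarE n T (by omega) hT C c1 c2) v‖ ≤ ℓ0 * ‖u - v‖ := by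
  obtain ⟨A, hΨ⟩ := exists_isBoundedC11_Psi
  obtain ⟨B, hΦ⟩ := exists_isBoundedC11_Phi
  have hpos : 0 < |Psi 1| * B + 8 * (A * B) + 81 := by positivity
  refine ⟨|Psi 1| * B + 8 * (A * B) + 81, hpos, ?_⟩
  rintro n T hn hT a1 a2 _ _ _ ha1 ha2 rfl rfl rfl u v
  have ha2_ge : 1 / 3 ≤ a2 := ha2 ▸ one_third_le_Bmat_last_zero_div hn
  rw [Bmat_zero_zero hn (by positivity), mul_div_assoc, ← ha2] at ha1
  have hα : 0 ≤ ((n : ℝ) ^ 2)⁻¹ := by positivity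
  have hcoef : |12 / a2 * (a2 - a1)| ≤ 24 := by
    rw [ha1]
    exact abs_twelve_div_mul_sub_mul_le (by positivity) (one_le_pathSeq hα _)
      (pathSeq_inv_sq_le_three hn)
  have hsqrt := sqrt_twelve_div_div_le_six (n := n) (by omega) ha2_ge
  refine ((smoothWrt_fbarE hΨ hΦ _ hT _ _ _).mono fun w => ?_).norm_gradient_sub_le hpos.le u v
  rw [abs_div, abs_div, Nat.abs_ofNat, Nat.abs_ofNat]
  refine mul_le_mul_of_nonneg_right ?_ (sq_nonneg ‖w‖)
  linarith

/-- there is a numerical constant `ℓ₀ > 0`, independent of `n` and `T`,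
such that `f̄^{nc-sc}` is `ℓ₀`-smooth: its gradient is `ℓ₀`-Lipschitz in Euclidean norm. -/
theorem stmt_10 :
    ∃ ℓ0 : ℝ, 0 < ℓ0 ∧
      ∀ (n T : ℕ) (hn : 10 ≤ n) (hT : 2 ≤ T) (a1 a2 C c1 c2 : ℝ),
        a1 = Bmat n (((n : ℝ) ^ 2)⁻¹) ⟨0, by omega⟩ ⟨0, by omega⟩ / n →
        a2 = Bmat n (((n : ℝ) ^ 2)⁻¹) ⟨n - 1, by omega⟩ ⟨0, by omega⟩ / n →
        C = 12 / a2 → c1 = C * (a2 - a1) / 2 → c2 = C * (a2 - a1) / 8 →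
        ∀ u v : EuclideanSpace ℝ (Fin T ⊕ (Fin (T - 1) ⊕ Fin (T - 1) × Fin n)),
          ‖gradient (fbarE n T (by omega) hT C c1 c2) u
              - gradient (fbarE n T (by omega) hT C c1 c2) v‖ ≤ ℓ0 * ‖u - v‖ := by
  obtain ⟨ℓ0, hpos, h⟩ := stmt_10_general
  exact ⟨ℓ0, hpos, fun n T hn => h n T (le_trans (by norm_num) hn)⟩
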